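/- arXiv:1903.09357 — 4 statements merged into one kernel-verified Lean document; each statement's English description precedes it below -/
import Mathlib

section
/- Assume the faithfulness condition (F). Let (u,v) ∈ N_A be a point of the complex shell such that either u_i ≠ 0 for all i = 1,…,ℓ, or v_i ≠ 0 for all i = 1,…,ℓ. Then there exist t ∈ (ℂ^×)^ℓ and (z,w) ∈ N_B such that t·(u,v) = φ_ℂ(z,w). In other words, every point of N_A all of whose first ℓ u-coordinates (or all of whose first ℓ v-coordinates) are nonzero lies in the (ℂ^×)^ℓ-orbit of the section S = φ_ℂ(N_B). -/
open Complex

/-- Points of `ℂ^{ℓ+k}`, split as the first `ℓ` and the last `k` coordinates. -/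
abbrev PtA (ℓ k : ℕ) := (Fin ℓ → ℂ) × (Fin k → ℂ)

/-- Points of `ℂ^{k+1}`, split as the first coordinate and the last `k` coordinates. -/
abbrev PtB (k : ℕ) := ℂ × (Fin k → ℂ)

/-- The action of `(ℂ^×)^ℓ` on `ℂ^{ℓ+k} × ℂ^{ℓ+k}` (pairs `(u,v)`):
`u_i ↦ t_i^{-a_i} u_i`, `v_i ↦ t_i^{a_i} v_i` for `i ≤ ℓ`,
`u_{ℓ+r} ↦ (∏_i t_i^{c_r n_i}) u_{ℓ+r}`, `v_{ℓ+r} ↦ (∏_i t_i^{c_r n_i})⁻¹ v_{ℓ+r}`. -/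
noncomputable def actC (ℓ k : ℕ) (a n : Fin ℓ → ℕ) (c : Fin k → ℕ)
    (t : Fin ℓ → ℂ) (p : PtA ℓ k × PtA ℓ k) : PtA ℓ k × PtA ℓ k :=
  ((fun i => t i ^ (-(a i : ℤ)) * p.1.1 i,
      fun r => (∏ i, t i ^ (c r * n i)) * p.1.2 r),
   (fun i => t i ^ (a i : ℤ) * p.2.1 i,
      fun r => (∏ i, t i ^ (c r * n i))⁻¹ * p.2.2 r))

/-- The complex shell `N_A`. -/
def memNA (ℓ k : ℕ) (a n : Fin ℓ → ℕ) (c : Fin k → ℕ)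
    (p : PtA ℓ k × PtA ℓ k) : Prop :=
  ∀ i, -(a i : ℂ) * p.1.1 i * p.2.1 i
      + (n i : ℂ) * ∑ r, (c r : ℂ) * p.1.2 r * p.2.2 r = 0

/-- The complex shell `N_B`. -/
def memNB (k : ℕ) (α β : ℕ) (c : Fin k → ℕ) (p : PtB k × PtB k) : Prop :=
  -(α : ℂ) * p.1.1 * p.2.1 + (β : ℂ) * ∑ r, (c r : ℂ) * p.1.2 r * p.2.2 r = 0

/-- The embedding `φ : ℂ^{k+1} → ℂ^{ℓ+k}`. -/
noncomputable def phiMap (ℓ k : ℕ) (m : Fin ℓ → ℕ) (β : ℕ)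
    (z : PtB k) : PtA ℓ k :=
  (fun i => (Real.sqrt ((m i : ℝ) / (β : ℝ)) : ℂ) * z.1, z.2)

/-- The complexified embedding `φ_ℂ(z,w) = (φz, φw)`. -/
noncomputable def phiC (ℓ k : ℕ) (m : Fin ℓ → ℕ) (β : ℕ)
    (p : PtB k × PtB k) : PtA ℓ k × PtA ℓ k :=
  (phiMap ℓ k m β p.1, phiMap ℓ k m β p.2)

/-- every point of `N_A` whose first `ℓ` `u`-coordinates (or first `ℓ`
`v`-coordinates) are all nonzero lies in the `(ℂ^×)^ℓ`-orbit of `S = φ_ℂ(N_B)`. -/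
theorem stmt3 (ℓ k : ℕ) (hℓ : 1 ≤ ℓ) (hk : 1 ≤ k)
    (a n : Fin ℓ → ℕ) (c : Fin k → ℕ)
    (ha : ∀ i, 0 < a i) (hn : ∀ i, 0 < n i) (hc : ∀ r, 0 < c r)
    (hF1 : ∀ i j, i ≠ j → Nat.gcd (a i) (a j) = 1)
    (hF2 : ∀ i, ∃ r, Nat.gcd (a i) (c r * n i) = 1) :
    let α : ℕ := Finset.univ.lcm a
    let m : Fin ℓ → ℕ := fun i => n i * α / a i
    let β : ℕ := ∑ i, m i
    ∀ p : PtA ℓ k × PtA ℓ k, memNA ℓ k a n c p →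
      ((∀ i, p.1.1 i ≠ 0) ∨ (∀ i, p.2.1 i ≠ 0)) →
      ∃ t : Fin ℓ → ℂ, (∀ i, t i ≠ 0) ∧
        ∃ q : PtB k × PtB k, memNB k α β c q ∧
          actC ℓ k a n c t p = phiC ℓ k m β q := by
  intro α m β p hp hor
  have hα : 0 < α := by
    apply Nat.pos_of_ne_zero
    intro h
    obtain ⟨x, -, hx⟩ := Finset.lcm_eq_zero_iff.mp h
    exact (ha x).ne' hx
  have hma : ∀ i, m i * a i = n i * α := fun i =>
    Nat.div_mul_cancel (Dvd.dvd.mul_left (Finset.dvd_lcm (Finset.mem_univ i)) _)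
  have hm : ∀ i, 0 < m i := fun i =>
    Nat.pos_of_mul_pos_right (by rw [hma]; exact Nat.mul_pos (hn i) hα)
  have hβ : 0 < β := Finset.sum_pos (fun i _ => hm i) ⟨⟨0, hℓ⟩, Finset.mem_univ _⟩
  clear_value α m β
  set s : Fin ℓ → ℂ := fun i => (Real.sqrt ((m i : ℝ) / (β : ℝ)) : ℂ) with hs
  have hαC : (α : ℂ) ≠ 0 := by exact_mod_cast hα.ne'
  have hβC : (β : ℂ) ≠ 0 := by exact_mod_cast hβ.ne'
  have haC : ∀ i, (a i : ℂ) ≠ 0 := fun i => by exact_mod_cast (ha i).ne'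
  have hss : ∀ i, s i * s i = (m i : ℂ) / β := fun i => by
    simp only [hs]
    rw [← Complex.ofReal_mul, Real.mul_self_sqrt (by positivity)]
    push_cast
    rfl
  have hs0 : ∀ i, s i ≠ 0 := fun i h => by
    have h2 := hss i
    have : (m i : ℂ) ≠ 0 := by exact_mod_cast (hm i).ne'
    rw [h, zero_mul] at h2
    exact div_ne_zero this hβC h2.symm
  set S : ℂ := ∑ r, (c r : ℂ) * p.1.2 r * p.2.2 r with hS
  have huv : ∀ i, p.1.1 i * p.2.1 i = s i * s i * (β * S / α) := fun i => by
    have h1 := hp i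
    rw [← hS] at h1
    have h2 : (m i : ℂ) * a i = n i * α := by exact_mod_cast hma i
    rw [hss]
    field_simp
    apply mul_left_cancel₀ (haC i)
    linear_combination (-(α : ℂ)) * h1 - S * h2
  have key : ∀ (t : Fin ℓ → ℂ) (z w : ℂ), (∀ i, t i ≠ 0) → z * w = β * S / α →
      (∀ i, t i ^ (-(a i : ℤ)) * p.1.1 i = s i * z) →
      (∀ i, t i ^ (a i : ℤ) * p.2.1 i = s i * w) →
      ∃ t : Fin ℓ → ℂ, (∀ i, t i ≠ 0) ∧
        ∃ q : PtB k × PtB k, memNB k α β c q ∧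
          actC ℓ k a n c t p = phiC ℓ k m β q := by
    intro t z w ht hzw h1 h2
    refine ⟨t, ht, ((z, fun r => (∏ i, t i ^ (c r * n i)) * p.1.2 r),
      (w, fun r => (∏ i, t i ^ (c r * n i))⁻¹ * p.2.2 r)), ?_, ?_⟩
    · have : ∑ r, (c r : ℂ) * ((∏ i, t i ^ (c r * n i)) * p.1.2 r) *
          ((∏ i, t i ^ (c r * n i))⁻¹ * p.2.2 r) = S := by
        rw [hS]
        refine Finset.sum_congr rfl fun r _ => ?_
        have h0 : (∏ i, t i ^ (c r * n i)) ≠ 0 :=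
          Finset.prod_ne_zero_iff.mpr fun i _ => pow_ne_zero _ (ht i)
        field_simp
      simp only [memNB]
      rw [this, mul_assoc, hzw]
      field_simp
      ring
    · simp only [actC, phiC, phiMap]
      ext i
      · exact h1 i
      · rfl
      · exact h2 i
      · rfl
  have root : ∀ x : Fin ℓ → ℂ, (∀ i, x i ≠ 0) →
      ∃ t : Fin ℓ → ℂ, (∀ i, t i ≠ 0) ∧ ∀ i, t i ^ a i = x i := by
    intro x hx
    choose t ht using fun i => IsAlgClosed.exists_pow_nat_eq (x i) (ha i)
    refine ⟨t, fun i h => hx i ?_, ht⟩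
    rw [← ht i, h, zero_pow (ha i).ne']
  rcases hor with h | h
  · obtain ⟨t, ht, hta⟩ := root (fun i => p.1.1 i / s i) fun i => div_ne_zero (h i) (hs0 i)
    refine key t 1 (β * S / α) ht (one_mul _) (fun i => ?_) (fun i => ?_)
    · rw [zpow_neg, zpow_natCast, hta, inv_div, div_mul_cancel₀ _ (h i), mul_one]
    · rw [zpow_natCast, hta, div_mul_eq_mul_div, huv, div_eq_iff (hs0 i)]
      ring
  · obtain ⟨t, ht, hta⟩ := root (fun i => s i / p.2.1 i) fun i => div_ne_zero (hs0 i) (h i)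
    refine key t (β * S / α) 1 ht (mul_one _) (fun i => ?_) (fun i => ?_)
    · rw [zpow_neg, zpow_natCast, hta, inv_div, div_mul_eq_mul_div, mul_comm (p.2.1 i), huv,
        div_eq_iff (hs0 i)]
      ring
    · rw [zpow_natCast, hta, div_mul_cancel₀ _ (h i), mul_one]
end

section
/- Assume the faithfulness condition (F). Let (z,w) ∈ N_B and t ∈ (ℂ^×)^ℓ be such that t·φ_ℂ(z,w) ∈ S = φ_ℂ(N_B). Then there exists s ∈ ℂ^× such that t·φ_ℂ(z,w) = (s^{α/a_1}, s^{α/a_2}, …, s^{α/a_ℓ})·φ_ℂ(z,w). (This is the Seshadri-section property: the intersection of any (ℂ^×)^ℓ-orbit with S is an orbit of the one-parameter subgroup {(s^{α/a_1},…,s^{α/a_ℓ}) : s ∈ ℂ^×}.) -/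
open Complex

theorem sv_root (a b : ℕ) (h : Nat.Coprime a b) (ω : ℂ) (h0 : ω ≠ 0) (hω : ω ^ a = 1) :
    ∃ ρ : ℂ, ρ ≠ 0 ∧ ρ ^ a = 1 ∧ ρ ^ b = ω := by
  refine ⟨ω ^ (Nat.gcdB a b), zpow_ne_zero _ h0, ?_, ?_⟩
  · rw [← zpow_natCast, ← zpow_mul, mul_comm, zpow_mul, zpow_natCast, hω, one_zpow]
  · have h1 := Nat.gcd_eq_gcd_ab a b
    rw [h.gcd_eq_one] at h1
    have h2 : ω ^ ((1 : ℕ) : ℤ) = ω := by simp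
    rw [h1, zpow_add₀ h0, zpow_mul, zpow_natCast, hω, one_zpow, one_mul, mul_comm, zpow_mul,
      zpow_natCast] at h2
    exact h2

theorem sv_crt (ℓ : ℕ) (a : Fin ℓ → ℕ) (ha : ∀ i, 0 < a i)
    (hF1 : ∀ i j, i ≠ j → Nat.gcd (a i) (a j) = 1) (t : Fin ℓ → ℂ) (τ : ℂ) (hτ : τ ≠ 0)
    (ht : ∀ i, t i ^ a i = τ) :
    ∃ s : ℂ, s ≠ 0 ∧ ∀ i, s ^ (Finset.univ.lcm a / a i) = t i := by
  have hdvd : ∀ i, a i ∣ Finset.univ.lcm a := fun i => Finset.dvd_lcm (Finset.mem_univ i)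
  have hα0 : Finset.univ.lcm a ≠ 0 := by
    intro h
    rw [Finset.lcm_eq_zero_iff] at h
    obtain ⟨i, -, hi⟩ := h
    exact (ha i).ne' hi
  have hαd : Finset.univ.lcm a ∣ ∏ i, a i :=
    Finset.lcm_dvd fun i hi => Finset.dvd_prod_of_mem a hi
  generalize Finset.univ.lcm a = α at *
  have hmul : ∀ i, a i * (α / a i) = α := fun i => Nat.mul_div_cancel' (hdvd i)
  have hcop : ∀ i, Nat.Coprime (a i) (α / a i) := by
    intro i
    have h1 : α / a i ∣ ∏ j ∈ Finset.univ.erase i, a j := by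
      apply Nat.dvd_of_mul_dvd_mul_left (ha i)
      rw [hmul, Finset.mul_prod_erase _ _ (Finset.mem_univ i)]
      exact hαd
    refine Nat.Coprime.coprime_dvd_right h1 (Nat.Coprime.prod_right fun j hj => ?_)
    exact hF1 i j (Finset.ne_of_mem_erase hj).symm
  have hne : ∀ i j, i ≠ j → a j ∣ α / a i := by
    intro i j hij
    have h1 : a j ∣ a i * (α / a i) := by rw [hmul]; exact hdvd j
    exact Nat.Coprime.dvd_of_dvd_mul_left (hF1 j i hij.symm) h1
  have ht0 : ∀ i, t i ≠ 0 := by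
    intro i h
    apply hτ
    rw [← ht i, h, zero_pow (ha i).ne']
  obtain ⟨s0, hs0⟩ := IsAlgClosed.exists_pow_nat_eq τ (Nat.pos_of_ne_zero hα0)
  have hs00 : s0 ≠ 0 := by
    rintro rfl
    apply hτ
    rw [← hs0, zero_pow hα0]
  have key : ∀ i, ∃ ρ : ℂ, ρ ≠ 0 ∧ ρ ^ a i = 1 ∧ ρ ^ (α / a i) = t i / s0 ^ (α / a i) := by
    intro i
    refine sv_root _ _ (hcop i) _ (div_ne_zero (ht0 i) (pow_ne_zero _ hs00)) ?_
    rw [div_pow, ← pow_mul, mul_comm, hmul, hs0, ht, div_self hτ]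
  choose ρ hρ0 hρ1 hρ2 using key
  refine ⟨s0 * ∏ j, ρ j, mul_ne_zero hs00 (Finset.prod_ne_zero_iff.2 fun j _ => hρ0 j), ?_⟩
  intro i
  rw [mul_pow, ← Finset.prod_pow, Finset.prod_eq_single i, hρ2,
    mul_div_cancel₀ _ (pow_ne_zero _ hs00)]
  · intro j _ hj
    obtain ⟨d, hd⟩ := hne i j hj.symm
    rw [hd, pow_mul, hρ1, one_pow]
  · simp

/-- Seshadri-section property: if `(z,w) ∈ N_B` and `t ∈ (ℂ^×)^ℓ` are such
that `t·φ_ℂ(z,w)` again lies in `S = φ_ℂ(N_B)`, then `t·φ_ℂ(z,w)` is obtained from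
`φ_ℂ(z,w)` by an element of the one-parameter subgroup `{(s^{α/a_1},…,s^{α/a_ℓ}) : s ∈ ℂ^×}`. -/
theorem stmt4 (ℓ k : ℕ) (hℓ : 1 ≤ ℓ) (hk : 1 ≤ k)
    (a n : Fin ℓ → ℕ) (c : Fin k → ℕ)
    (ha : ∀ i, 0 < a i) (hn : ∀ i, 0 < n i) (hc : ∀ r, 0 < c r)
    (hF1 : ∀ i j, i ≠ j → Nat.gcd (a i) (a j) = 1)
    (hF2 : ∀ i, ∃ r, Nat.gcd (a i) (c r * n i) = 1) :
    let α : ℕ := Finset.univ.lcm a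
    let m : Fin ℓ → ℕ := fun i => n i * α / a i
    let β : ℕ := ∑ i, m i
    ∀ p : PtB k × PtB k, memNB k α β c p →
      ∀ t : Fin ℓ → ℂ, (∀ i, t i ≠ 0) →
        (∃ q : PtB k × PtB k, memNB k α β c q ∧
            actC ℓ k a n c t (phiC ℓ k m β p) = phiC ℓ k m β q) →
        ∃ s : ℂ, s ≠ 0 ∧
          actC ℓ k a n c t (phiC ℓ k m β p)
            = actC ℓ k a n c (fun i => s ^ (α / a i)) (phiC ℓ k m β p) := by
  intro α m β p hp t ht hq
  obtain ⟨q, -, hq⟩ := hq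
  have hdvd : ∀ i, a i ∣ α := fun i => Finset.dvd_lcm (Finset.mem_univ i)
  have hα0 : 0 < α := by
    refine Nat.pos_of_ne_zero fun h => ?_
    rw [Finset.lcm_eq_zero_iff] at h
    obtain ⟨i, -, hi⟩ := h
    exact (ha i).ne' hi
  have hm : ∀ i, m i = n i * (α / a i) := fun i => Nat.mul_div_assoc _ (hdvd i)
  have hm0 : ∀ i, 0 < m i := by
    intro i
    rw [hm]
    exact Nat.mul_pos (hn i) (Nat.div_pos (Nat.le_of_dvd hα0 (hdvd i)) (ha i))
  let i0 : Fin ℓ := ⟨0, hℓ⟩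
  have hβ0 : 0 < β := Finset.sum_pos (fun i _ => hm0 i) ⟨i0, Finset.mem_univ _⟩
  have hsq : ∀ i, ((Real.sqrt ((m i : ℝ) / (β : ℝ)) : ℝ) : ℂ) ≠ 0 := by
    intro i
    have h1 : (0 : ℝ) < m i := by exact_mod_cast hm0 i
    have h2 : (0 : ℝ) < β := by exact_mod_cast hβ0
    exact_mod_cast (Real.sqrt_pos.2 (div_pos h1 h2)).ne'
  by_cases hz : p.1.1 = 0 ∧ p.2.1 = 0
  · obtain ⟨s, hs⟩ := IsAlgClosed.exists_pow_nat_eq (∏ i, t i ^ n i) hβ0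
    have hT : (∏ i, t i ^ n i) ≠ 0 := Finset.prod_ne_zero_iff.2 fun j _ => pow_ne_zero _ (ht j)
    have key : ∀ r, ∏ i, t i ^ (c r * n i) = ∏ i, (s ^ (α / a i)) ^ (c r * n i) := by
      intro r
      have e1 : ∏ i, t i ^ (c r * n i) = (∏ i, t i ^ n i) ^ c r := by
        rw [← Finset.prod_pow]
        exact Finset.prod_congr rfl fun i _ => by rw [← pow_mul, mul_comm]
      rw [e1, ← hs, ← Finset.prod_pow_eq_pow_sum, ← Finset.prod_pow]
      refine Finset.prod_congr rfl fun i _ => ?_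
      rw [hm, ← pow_mul, ← pow_mul]
      congr 1
      ring
    refine ⟨s, ?_, ?_⟩
    · rintro rfl
      rw [zero_pow hβ0.ne'] at hs
      exact hT hs.symm
    · simp only [actC, phiC, phiMap, hz.1, hz.2, mul_zero, key]
  · have hτ : ∃ τ : ℂ, ∀ i, t i ^ a i = τ := by
      simp only [actC, phiC, phiMap, Prod.mk.injEq] at hq
      obtain ⟨⟨h1, -⟩, h2, -⟩ := hq
      by_cases hz1 : p.1.1 = 0
      · have hz2 : p.2.1 ≠ 0 := fun h => hz ⟨hz1, h⟩
        refine ⟨q.2.1 / p.2.1, fun i => ?_⟩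
        have := congrFun h2 i
        simp only [zpow_natCast] at this
        rw [eq_div_iff hz2]
        apply mul_left_cancel₀ (hsq i)
        linear_combination this
      · refine ⟨(q.1.1 / p.1.1)⁻¹, fun i => ?_⟩
        have := congrFun h1 i
        simp only [zpow_neg, zpow_natCast] at this
        rw [← inv_inj, inv_inv, eq_div_iff hz1]
        apply mul_left_cancel₀ (hsq i)
        linear_combination this
    obtain ⟨τ, hτ⟩ := hτ
    have hτ0 : τ ≠ 0 := by
      rw [← hτ i0]
      exact pow_ne_zero _ (ht i0)
    obtain ⟨s, hs0, hs⟩ := sv_crt ℓ a ha hF1 t τ hτ0 hτ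
    refine ⟨s, hs0, ?_⟩
    have : (fun i => s ^ (α / a i)) = t := funext hs
    rw [this]
end

section
/- Assume the faithfulness condition (F). For t ∈ (ℂ^×)^ℓ, one has t·S = S (where S = φ_ℂ(N_B) and t·S denotes the image of S under the action of t) if and only if there exists s ∈ ℂ^× with t_i = s^{α/a_i} for every i = 1,…,ℓ. That is, the stabilizer N(S) = {t ∈ (ℂ^×)^ℓ : t·S = S} equals the one-parameter subgroup {(s^{α/a_1},…,s^{α/a_ℓ}) : s ∈ ℂ^×}. -/
open Complex

/-- The section `S = φ_ℂ(N_B) ⊆ ℂ^{ℓ+k} × ℂ^{ℓ+k}`. -/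
noncomputable def secS (ℓ k : ℕ) (α β : ℕ) (m : Fin ℓ → ℕ) (c : Fin k → ℕ) :
    Set (PtA ℓ k × PtA ℓ k) :=
  {p | ∃ q : PtB k × PtB k, memNB k α β c q ∧ p = phiC ℓ k m β q}

theorem aux_lcm (ℓ : ℕ) (a : Fin ℓ → ℕ) (ha : ∀ i, 0 < a i)
    (hF1 : ∀ i j, i ≠ j → Nat.gcd (a i) (a j) = 1) (i : Fin ℓ) :
    Finset.univ.lcm a / a i = ∏ j ∈ Finset.univ.erase i, a j := by
  have hα : Finset.univ.lcm a = ∏ i, a i := by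
    apply Nat.dvd_antisymm
    · exact Finset.lcm_dvd fun i _ => Finset.dvd_prod_of_mem a (Finset.mem_univ i)
    · apply Finset.prod_dvd_of_isRelPrime
      · intro i _ j _ hij
        exact Nat.coprime_iff_isRelPrime.mp (hF1 i j hij)
      · intro i _
        exact Finset.dvd_lcm (Finset.mem_univ i)
  rw [hα, ← Finset.mul_prod_erase _ _ (Finset.mem_univ i), Nat.mul_div_cancel_left _ (ha i)]

theorem aux_root (ℓ : ℕ) (a : Fin ℓ → ℕ) (ha : ∀ i, 0 < a i)
    (hF1 : ∀ i j, i ≠ j → Nat.gcd (a i) (a j) = 1)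
    (t : Fin ℓ → ℂ) (w : ℂ) (hw : w ≠ 0) (h : ∀ i, t i ^ a i = w) :
    ∃ s : ℂ, s ≠ 0 ∧ ∀ i, t i = s ^ (Finset.univ.lcm a / a i) := by
  have hpos : 0 < Finset.univ.lcm a := by
    apply Nat.pos_of_ne_zero
    rw [Ne, Finset.lcm_eq_zero_iff]
    rintro ⟨i, _, hi⟩
    exact (ha i).ne' hi
  obtain ⟨s, hs⟩ := IsAlgClosed.exists_pow_nat_eq w hpos
  have hs0 : s ≠ 0 := by
    rintro rfl
    rw [zero_pow hpos.ne'] at hs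
    exact hw hs.symm
  have hdiv : ∀ i, Finset.univ.lcm a / a i * a i = Finset.univ.lcm a :=
    fun i => Nat.div_mul_cancel (Finset.dvd_lcm (Finset.mem_univ i))
  have hcop : ∀ i, Nat.Coprime (Finset.univ.lcm a / a i) (a i) := by
    intro i
    rw [aux_lcm ℓ a ha hF1 i]
    apply Nat.Coprime.prod_left
    intro j hj
    exact hF1 j i (Finset.ne_of_mem_erase hj)
  have hdvd : ∀ i j, j ≠ i → a j ∣ Finset.univ.lcm a / a i := by
    intro i j hij
    rw [aux_lcm ℓ a ha hF1 i]
    exact Finset.dvd_prod_of_mem a (Finset.mem_erase.mpr ⟨hij, Finset.mem_univ j⟩)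
  set A := Finset.univ.lcm a with hA
  let ζ : Fin ℓ → ℂ := fun i => t i / s ^ (A / a i)
  have hζ : ∀ i, ζ i ^ a i = 1 := by
    intro i
    simp only [ζ]
    rw [div_pow, h i, ← pow_mul, hdiv i, hs, div_self hw]
  have hζ0 : ∀ i, ζ i ≠ 0 := by
    intro i hi
    have := hζ i
    rw [hi, zero_pow (ha i).ne'] at this
    exact zero_ne_one this
  have hex : ∀ i, ∃ x : ℂ, x ≠ 0 ∧ x ^ a i = 1 ∧ x ^ (A / a i) = ζ i := by
    intro i
    have hb := Nat.gcd_eq_gcd_ab (A / a i) (a i)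
    rw [(hcop i : Nat.gcd _ _ = 1)] at hb
    refine ⟨ζ i ^ (Nat.gcdA (A / a i) (a i)), zpow_ne_zero _ (hζ0 i), ?_, ?_⟩
    · rw [← zpow_natCast, ← zpow_mul, mul_comm, zpow_mul, zpow_natCast, hζ i, one_zpow]
    · have e : ζ i ^ ((a i : ℤ) * Nat.gcdB (A / a i) (a i)) = 1 := by
        rw [zpow_mul, zpow_natCast, hζ i, one_zpow]
      calc (ζ i ^ (Nat.gcdA (A / a i) (a i))) ^ (A / a i)
          = ζ i ^ (((A / a i : ℕ) : ℤ) * Nat.gcdA (A / a i) (a i)) := by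
            rw [← zpow_natCast, ← zpow_mul, mul_comm]
        _ = ζ i ^ (((A / a i : ℕ) : ℤ) * Nat.gcdA (A / a i) (a i))
            * ζ i ^ ((a i : ℤ) * Nat.gcdB (A / a i) (a i)) := by rw [e, mul_one]
        _ = ζ i := by rw [← zpow_add₀ (hζ0 i), ← hb]; simp
  choose x hx0 hx1 hx2 using hex
  refine ⟨s * ∏ j, x j, mul_ne_zero hs0 (Finset.prod_ne_zero_iff.mpr fun j _ => hx0 j), ?_⟩
  intro i
  rw [mul_pow, ← Finset.prod_pow, Finset.prod_eq_single i, hx2 i]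
  · simp only [ζ]
    rw [mul_div_cancel₀ _ (pow_ne_zero _ hs0)]
  · intro j _ hj
    obtain ⟨d, hd⟩ := hdvd i j hj
    rw [hd, pow_mul, hx1 j, one_pow]
  · intro hi
    exact absurd (Finset.mem_univ i) hi

theorem aux_maps (ℓ k α β : ℕ) (m a n : Fin ℓ → ℕ) (c : Fin k → ℕ)
    (t : Fin ℓ → ℂ) (ht : ∀ i, t i ≠ 0) (w : ℂ) (hw : w ≠ 0) (h : ∀ i, t i ^ a i = w)
    (p : PtA ℓ k × PtA ℓ k) (hp : p ∈ secS ℓ k α β m c) :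
    actC ℓ k a n c t p ∈ secS ℓ k α β m c := by
  obtain ⟨q, hq, rfl⟩ := hp
  have hP : ∀ r, (∏ i, t i ^ (c r * n i)) ≠ 0 := fun r =>
    Finset.prod_ne_zero_iff.mpr fun i _ => pow_ne_zero _ (ht i)
  refine ⟨((w⁻¹ * q.1.1, fun r => (∏ i, t i ^ (c r * n i)) * q.1.2 r),
    (w * q.2.1, fun r => (∏ i, t i ^ (c r * n i))⁻¹ * q.2.2 r)), ?_, ?_⟩
  · unfold memNB at hq ⊢
    rw [← hq]
    congr 1
    · field_simp
    · congr 1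
      apply Finset.sum_congr rfl
      intro r _
      have := hP r
      simp only
      generalize (∏ i, t i ^ (c r * n i)) = P at *
      field_simp
  · unfold actC phiC phiMap
    simp only [zpow_neg, zpow_natCast, h]
    refine Prod.ext (Prod.ext ?_ rfl) (Prod.ext ?_ rfl)
    · funext i
      simp only
      ring
    · funext i
      simp only
      ring

theorem aux_inv (ℓ k : ℕ) (a n : Fin ℓ → ℕ) (c : Fin k → ℕ)
    (t : Fin ℓ → ℂ) (ht : ∀ i, t i ≠ 0) (p : PtA ℓ k × PtA ℓ k) :
    actC ℓ k a n c t (actC ℓ k a n c (fun i => (t i)⁻¹) p) = p := by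
  have hP : ∀ r, (∏ i, t i ^ (c r * n i)) ≠ 0 := fun r =>
    Finset.prod_ne_zero_iff.mpr fun i _ => pow_ne_zero _ (ht i)
  unfold actC
  refine Prod.ext (Prod.ext ?_ ?_) (Prod.ext ?_ ?_)
  · funext i
    have := pow_ne_zero (a i) (ht i)
    simp [this]
  · funext r
    simp [hP r]
  · funext i
    have := pow_ne_zero (a i) (ht i)
    simp [this]
  · funext r
    simp [hP r]

/-- for `t ∈ (ℂ^×)^ℓ`, `t·S = S` if and only if `t` lies in the
one-parameter subgroup `{(s^{α/a_1},…,s^{α/a_ℓ}) : s ∈ ℂ^×}`. -/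
theorem stmt5 (ℓ k : ℕ) (hℓ : 1 ≤ ℓ) (hk : 1 ≤ k)
    (a n : Fin ℓ → ℕ) (c : Fin k → ℕ)
    (ha : ∀ i, 0 < a i) (hn : ∀ i, 0 < n i) (hc : ∀ r, 0 < c r)
    (hF1 : ∀ i j, i ≠ j → Nat.gcd (a i) (a j) = 1)
    (hF2 : ∀ i, ∃ r, Nat.gcd (a i) (c r * n i) = 1) :
    let α : ℕ := Finset.univ.lcm a
    let m : Fin ℓ → ℕ := fun i => n i * α / a i
    let β : ℕ := ∑ i, m i
    ∀ t : Fin ℓ → ℂ, (∀ i, t i ≠ 0) →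
      ((actC ℓ k a n c t '' secS ℓ k α β m c) = secS ℓ k α β m c
        ↔ ∃ s : ℂ, s ≠ 0 ∧ ∀ i, t i = s ^ (α / a i)) := by
  intro α m β t ht
  have hα : 0 < α := by
    apply Nat.pos_of_ne_zero
    rw [Ne, Finset.lcm_eq_zero_iff]
    rintro ⟨i, _, hi⟩
    exact (ha i).ne' hi
  have hdvd : ∀ i, a i ∣ α := fun i => Finset.dvd_lcm (Finset.mem_univ i)
  have hm : ∀ i, 0 < m i := fun i =>
    Nat.div_pos (Nat.le_of_dvd (Nat.mul_pos (hn i) hα) (Dvd.dvd.mul_left (hdvd i) _)) (ha i)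
  have hβ : 0 < β := Finset.sum_pos (fun i _ => hm i) ⟨⟨0, hℓ⟩, Finset.mem_univ _⟩
  constructor
  · intro hS
    have h0 : phiC ℓ k m β ((0, fun _ => 0), (1, fun _ => 0)) ∈ secS ℓ k α β m c :=
      ⟨_, by simp [memNB], rfl⟩
    have h1 := Set.mem_image_of_mem (actC ℓ k a n c t) h0
    rw [hS] at h1
    obtain ⟨q, _, hq⟩ := h1
    have h2 : ∀ i, t i ^ a i = q.2.1 := by
      intro i
      have h3 := congrFun (congrArg (fun p => p.2.1) hq) i
      simp only [actC, phiC, phiMap, zpow_natCast, mul_one] at h3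
      have h4 : ((Real.sqrt ((m i : ℝ) / (β : ℝ)) : ℝ) : ℂ) ≠ 0 := by
        rw [Complex.ofReal_ne_zero]
        have : (0 : ℝ) < m i := by exact_mod_cast hm i
        have : (0 : ℝ) < β := by exact_mod_cast hβ
        positivity
      rw [mul_comm] at h3
      exact mul_left_cancel₀ h4 h3
    refine aux_root ℓ a ha hF1 t q.2.1 ?_ h2
    rw [← h2 ⟨0, hℓ⟩]
    exact pow_ne_zero _ (ht _)
  · rintro ⟨s, hs, hts⟩
    have h2 : ∀ i, t i ^ a i = s ^ α := by
      intro i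
      rw [hts i, ← pow_mul, Nat.div_mul_cancel (hdvd i)]
    have h3 : ∀ i, ((t i)⁻¹) ^ a i = (s ^ α)⁻¹ := by
      intro i
      rw [inv_pow, h2 i]
    apply Set.Subset.antisymm
    · rintro _ ⟨p, hp, rfl⟩
      exact aux_maps ℓ k α β m a n c t ht _ (pow_ne_zero _ hs) h2 p hp
    · intro p hp
      exact ⟨_, aux_maps ℓ k α β m a n c (fun i => (t i)⁻¹) (fun i => inv_ne_zero (ht i)) _
        (inv_ne_zero (pow_ne_zero _ hs)) h3 p hp, aux_inv ℓ k a n c t ht p⟩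
end

section
/- Assume Type I_k (c_1 = ⋯ = c_k = 1) and the faithfulness condition (F). Let P_A = ℂ[u_1,…,u_{ℓ+k}, v_1,…,v_{ℓ+k}] and P_B = ℂ[z_1,…,z_{k+1}, w_1,…,w_{k+1}], with invariant subalgebras P_A^{inv} (for the (ℂ^×)^ℓ-action with weight matrix A) and P_B^{inv} (for the ℂ^×-action with weight row B = (−α, β, …, β)). Then there is a well-defined ℂ-algebra homomorphism Φ : P_A^{inv} → P_B^{inv} determined on the generators by Φ(u_i v_i) = (m_i/β)·z_1 w_1 for i = 1,…,ℓ, Φ(u_{ℓ+i} v_{ℓ+j}) = z_{1+i} w_{1+j} for 1 ≤ i,j ≤ k, Φ(q_s) = C·z_1^{β}·∏_{j=1}^k z_{1+j}^{s_j} and Φ(q̄_s) = C·w_1^{β}·∏_{j=1}^k w_{1+j}^{s_j} for each s ∈ ℕ^k with |s| = α, where C = √(β^{−β}·∏_{j=1}^ℓ m_j^{m_j}), q_s = (∏_{i=1}^ℓ u_i^{m_i})(∏_{j=1}^k u_{ℓ+j}^{s_j}) and q̄_s = (∏_{i=1}^ℓ v_i^{m_i})(∏_{j=1}^k v_{ℓ+j}^{s_j});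 and Φ descends to a degree-preserving isomorphism of graded ℂ-algebras P_A^{inv}/(J_{A,1},…,J_{A,ℓ}) → P_B^{inv}/(J_B), where J_{A,i} = −a_i u_i v_i + n_i Σ_{j=1}^k u_{ℓ+j} v_{ℓ+j} and J_B = −α z_1 w_1 + β Σ_{j=1}^k z_{1+j} w_{1+j}. -/
open Complex MvPolynomial

/-- The polynomial ring `P_A = ℂ[u, v]`, `u, v` indexed by `Fin ℓ ⊕ Fin k`. -/
abbrev PA (ℓ k : ℕ) := MvPolynomial ((Fin ℓ ⊕ Fin k) ⊕ (Fin ℓ ⊕ Fin k)) ℂ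

/-- The polynomial ring `P_B = ℂ[z, w]`, `z, w` indexed by `Unit ⊕ Fin k`
(`Sum.inl ()` is `z_1` resp. `w_1`). -/
abbrev PB (k : ℕ) := MvPolynomial ((Unit ⊕ Fin k) ⊕ (Unit ⊕ Fin k)) ℂ

/-- The substitution action of `t ∈ (ℂ^×)^ℓ` on `P_A` for the Type I_k weight matrix
`A = [diag(-a_1,…,-a_ℓ), n, …, n]`. -/
noncomputable def actPA (ℓ k : ℕ) (a n : Fin ℓ → ℕ) (t : Fin ℓ → ℂ) :
    PA ℓ k →ₐ[ℂ] PA ℓ k :=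
  aeval fun x => match x with
    | Sum.inl (Sum.inl i) => C (t i ^ (-(a i : ℤ))) * X (Sum.inl (Sum.inl i))
    | Sum.inl (Sum.inr j) => C (∏ i, t i ^ n i) * X (Sum.inl (Sum.inr j))
    | Sum.inr (Sum.inl i) => C (t i ^ (a i : ℤ)) * X (Sum.inr (Sum.inl i))
    | Sum.inr (Sum.inr j) => C ((∏ i, t i ^ n i)⁻¹) * X (Sum.inr (Sum.inr j))

/-- The substitution action of `t ∈ ℂ^×` on `P_B` for the weight row `B = (-α, β, …, β)`. -/
noncomputable def actPB (k : ℕ) (α β : ℕ) (t : ℂ) : PB k →ₐ[ℂ] PB k :=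
  aeval fun x => match x with
    | Sum.inl (Sum.inl _) => C (t ^ (-(α : ℤ))) * X (Sum.inl (Sum.inl ()))
    | Sum.inl (Sum.inr j) => C (t ^ (β : ℤ)) * X (Sum.inl (Sum.inr j))
    | Sum.inr (Sum.inl _) => C (t ^ (α : ℤ)) * X (Sum.inr (Sum.inl ()))
    | Sum.inr (Sum.inr j) => C (t ^ (-(β : ℤ))) * X (Sum.inr (Sum.inr j))

/-- The subalgebra of `(ℂ^×)^ℓ`-invariant polynomials of `P_A`. -/
noncomputable def invPA (ℓ k : ℕ) (a n : Fin ℓ → ℕ) : Subalgebra ℂ (PA ℓ k) where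
  carrier := {f | ∀ t : Fin ℓ → ℂ, (∀ i, t i ≠ 0) → actPA ℓ k a n t f = f}
  mul_mem' hf hg t ht := by rw [map_mul, hf t ht, hg t ht]
  add_mem' hf hg t ht := by rw [map_add, hf t ht, hg t ht]
  one_mem' t ht := map_one _
  zero_mem' t ht := map_zero _
  algebraMap_mem' r t ht := (actPA ℓ k a n t).commutes r

/-- The subalgebra of `ℂ^×`-invariant polynomials of `P_B`. -/
noncomputable def invPB (k : ℕ) (α β : ℕ) : Subalgebra ℂ (PB k) where
  carrier := {f | ∀ t : ℂ, t ≠ 0 → actPB k α β t f = f}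
  mul_mem' hf hg t ht := by rw [map_mul, hf t ht, hg t ht]
  add_mem' hf hg t ht := by rw [map_add, hf t ht, hg t ht]
  one_mem' t ht := map_one _
  zero_mem' t ht := map_zero _
  algebraMap_mem' r t ht := (actPB k α β t).commutes r

/-- The substitution `Φ₀ : P_A → P_B` inducing the map `Φ` on the generators:
`u_i ↦ √(m_i/β) z_1`, `v_i ↦ √(m_i/β) w_1`, `u_{ℓ+j} ↦ z_{1+j}`, `v_{ℓ+j} ↦ w_{1+j}`. -/
noncomputable def PhiZero (ℓ k : ℕ) (m : Fin ℓ → ℕ) (β : ℕ) : PA ℓ k →ₐ[ℂ] PB k :=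
  aeval fun x => match x with
    | Sum.inl (Sum.inl i) =>
        C ((Real.sqrt ((m i : ℝ) / (β : ℝ)) : ℝ) : ℂ) * X (Sum.inl (Sum.inl ()))
    | Sum.inl (Sum.inr j) => X (Sum.inl (Sum.inr j))
    | Sum.inr (Sum.inl i) =>
        C ((Real.sqrt ((m i : ℝ) / (β : ℝ)) : ℝ) : ℂ) * X (Sum.inr (Sum.inl ()))
    | Sum.inr (Sum.inr j) => X (Sum.inr (Sum.inr j))

/-- The moment polynomials `J_{A,i} = -a_i u_i v_i + n_i Σ_j u_{ℓ+j} v_{ℓ+j}`. -/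
noncomputable def JA (ℓ k : ℕ) (a n : Fin ℓ → ℕ) (i : Fin ℓ) : PA ℓ k :=
  -(C ((a i : ℂ)) * X (Sum.inl (Sum.inl i)) * X (Sum.inr (Sum.inl i)))
    + C ((n i : ℂ)) * ∑ j, X (Sum.inl (Sum.inr j)) * X (Sum.inr (Sum.inr j))

/-- The moment polynomial `J_B = -α z_1 w_1 + β Σ_j z_{1+j} w_{1+j}`. -/
noncomputable def JB (k : ℕ) (α β : ℕ) : PB k :=
  -(C ((α : ℂ)) * X (Sum.inl (Sum.inl ())) * X (Sum.inr (Sum.inl ())))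
    + C ((β : ℂ)) * ∑ j, X (Sum.inl (Sum.inr j)) * X (Sum.inr (Sum.inr j))

/-- The ideal of `P_A^{inv}` generated by the moment polynomials. -/
noncomputable def idealA (ℓ k : ℕ) (a n : Fin ℓ → ℕ) : Ideal (invPA ℓ k a n) :=
  Ideal.span {f : invPA ℓ k a n | ∃ i, (f : PA ℓ k) = JA ℓ k a n i}

/-- The ideal of `P_B^{inv}` generated by the moment polynomial. -/
noncomputable def idealB (k : ℕ) (α β : ℕ) : Ideal (invPB k α β) :=
  Ideal.span {f : invPB k α β | (f : PB k) = JB k α β}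

section helpers

lemma h_diag {σ : Type*} [Fintype σ] (w : σ → ℂ) (D : σ →₀ ℕ) (c : ℂ) :
    aeval (fun x => C (w x) * X x : σ → MvPolynomial σ ℂ) (monomial D c)
      = monomial D ((∏ x, w x ^ D x) * c) := by
  rw [aeval_monomial, Finsupp.prod_fintype _ _ (fun _ => pow_zero _)]
  simp only [mul_pow, Finset.prod_mul_distrib]
  rw [monomial_eq (s := D), Finsupp.prod_fintype _ _ (fun _ => pow_zero _)]
  simp only [← map_pow, ← map_prod, algebraMap_eq, C_mul]
  ring

lemma h_diag_coeff {σ : Type*} [Fintype σ] (w : σ → ℂ) (D : σ →₀ ℕ) (f : MvPolynomial σ ℂ) :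
    coeff D (aeval (fun x => C (w x) * X x : σ → MvPolynomial σ ℂ) f)
      = (∏ x, w x ^ D x) * coeff D f := by
  classical
  induction f using MvPolynomial.induction_on' with
  | monomial E c =>
    rw [h_diag, coeff_monomial, coeff_monomial]
    split_ifs with h
    · rw [h]
    · simp
  | add p q hp hq => rw [map_add, coeff_add, hp, hq, coeff_add]; ring

lemma h_lin_ext {σ V : Type*} [AddCommGroup V] [Module ℂ V]
    (L1 L2 : MvPolynomial σ ℂ →ₗ[ℂ] V) (f : MvPolynomial σ ℂ)
    (h : ∀ D ∈ f.support, L1 (monomial D 1) = L2 (monomial D 1)) : L1 f = L2 f := by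
  have key : ∀ L : MvPolynomial σ ℂ →ₗ[ℂ] V,
      L f = ∑ D ∈ f.support, coeff D f • L (monomial D 1) := by
    intro L
    conv_lhs => rw [f.as_sum]
    rw [map_sum]
    refine Finset.sum_congr rfl fun D _ => ?_
    rw [← map_smul, smul_monomial, smul_eq_mul, mul_one]
  rw [key, key]
  exact Finset.sum_congr rfl fun D hD => by rw [h D hD]

/-- weights -/
noncomputable def wA (ℓ k : ℕ) (a n : Fin ℓ → ℕ) (t : Fin ℓ → ℂ) :
    ((Fin ℓ ⊕ Fin k) ⊕ (Fin ℓ ⊕ Fin k)) → ℂ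
  | Sum.inl (Sum.inl i) => t i ^ (-(a i : ℤ))
  | Sum.inl (Sum.inr _) => ∏ i, t i ^ n i
  | Sum.inr (Sum.inl i) => t i ^ (a i : ℤ)
  | Sum.inr (Sum.inr _) => (∏ i, t i ^ n i)⁻¹

noncomputable def wB (k : ℕ) (α β : ℕ) (t : ℂ) :
    ((Unit ⊕ Fin k) ⊕ (Unit ⊕ Fin k)) → ℂ
  | Sum.inl (Sum.inl _) => t ^ (-(α : ℤ))
  | Sum.inl (Sum.inr _) => t ^ (β : ℤ)
  | Sum.inr (Sum.inl _) => t ^ (α : ℤ)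
  | Sum.inr (Sum.inr _) => t ^ (-(β : ℤ))

lemma actPA_eq (ℓ k : ℕ) (a n : Fin ℓ → ℕ) (t : Fin ℓ → ℂ) :
    actPA ℓ k a n t = aeval (fun x => C (wA ℓ k a n t x) * X x) := by
  apply MvPolynomial.algHom_ext
  rintro ((i | j) | (i | j)) <;> simp [actPA, wA]

lemma actPB_eq (k : ℕ) (α β : ℕ) (t : ℂ) :
    actPB k α β t = aeval (fun x => C (wB k α β t x) * X x) := by
  apply MvPolynomial.algHom_ext
  rintro ((i | j) | (i | j)) <;> simp [actPB, wB]

def IA {ℓ k : ℕ} (a n : Fin ℓ → ℕ) (D : ((Fin ℓ ⊕ Fin k) ⊕ (Fin ℓ ⊕ Fin k)) →₀ ℕ) : Prop :=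
  ∀ i, (a i : ℤ) * (D (Sum.inl (Sum.inl i)) - D (Sum.inr (Sum.inl i)))
    = n i * (∑ j, (D (Sum.inl (Sum.inr j)) : ℤ) - ∑ j, (D (Sum.inr (Sum.inr j)) : ℤ))

def IB {k : ℕ} (α β : ℕ) (D : ((Unit ⊕ Fin k) ⊕ (Unit ⊕ Fin k)) →₀ ℕ) : Prop :=
  (α : ℤ) * (D (Sum.inl (Sum.inl ())) - D (Sum.inr (Sum.inl ())))
    = β * (∑ j, (D (Sum.inl (Sum.inr j)) : ℤ) - ∑ j, (D (Sum.inr (Sum.inr j)) : ℤ))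

lemma h_zprod {ι : Type*} [Fintype ι] (t : ℂ) (f : ι → ℕ) :
    ∏ i, t ^ f i = t ^ (∑ i, (f i : ℤ)) := by
  rw [Finset.prod_pow_eq_pow_sum]
  norm_cast

lemma wA_prod {ℓ k : ℕ} (a n : Fin ℓ → ℕ) (t : Fin ℓ → ℂ) (ht : ∀ i, t i ≠ 0)
    (D : ((Fin ℓ ⊕ Fin k) ⊕ (Fin ℓ ⊕ Fin k)) →₀ ℕ) :
    ∏ x, wA ℓ k a n t x ^ D x = ∏ i, t i ^
      ((n i : ℤ) * (∑ j, (D (Sum.inl (Sum.inr j)) : ℤ) - ∑ j, (D (Sum.inr (Sum.inr j)) : ℤ))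
      - (a i : ℤ) * (D (Sum.inl (Sum.inl i)) - D (Sum.inr (Sum.inl i)))) := by
  simp only [Fintype.prod_sum_type, wA]
  rw [h_zprod, h_zprod, inv_zpow', ← Finset.prod_zpow, ← Finset.prod_zpow,
    ← Finset.prod_mul_distrib, ← Finset.prod_mul_distrib, ← Finset.prod_mul_distrib]
  refine Finset.prod_congr rfl fun i _ => ?_
  simp only [← zpow_natCast, ← zpow_mul, ← zpow_add₀ (ht i)]
  congr 1
  ring

lemma wB_prod {k : ℕ} (α β : ℕ) (t : ℂ) (ht : t ≠ 0)
    (D : ((Unit ⊕ Fin k) ⊕ (Unit ⊕ Fin k)) →₀ ℕ) :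
    ∏ x, wB k α β t x ^ D x = t ^
      ((β : ℤ) * (∑ j, (D (Sum.inl (Sum.inr j)) : ℤ) - ∑ j, (D (Sum.inr (Sum.inr j)) : ℤ))
      - (α : ℤ) * (D (Sum.inl (Sum.inl ())) - D (Sum.inr (Sum.inl ())))) := by
  simp only [Fintype.prod_sum_type, wB]
  rw [h_zprod (ι := Fin k), h_zprod (ι := Fin k)]
  simp only [Finset.univ_unique, Finset.prod_singleton, ← zpow_natCast, ← zpow_mul, ← zpow_add₀ ht]
  congr 1
  simp only [PUnit.default_eq_unit]
  ring

lemma IA_mem {ℓ k : ℕ} {a n : Fin ℓ → ℕ} {D : ((Fin ℓ ⊕ Fin k) ⊕ (Fin ℓ ⊕ Fin k)) →₀ ℕ}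
    (h : IA a n D) : monomial D 1 ∈ invPA ℓ k a n := by
  intro t ht
  rw [actPA_eq, h_diag, wA_prod a n t ht]
  rw [Finset.prod_eq_one, mul_one]
  intro i _
  rw [h i, sub_self, zpow_zero]

lemma h_two {z : ℤ} (h : (2 : ℂ) ^ z = 1) : z = 0 := by
  have h2 : ((2 : ℝ) ^ z) = 1 := by
    apply Complex.ofReal_injective
    push_cast
    exact h
  exact (zpow_eq_one_iff_right₀ (by norm_num) (by norm_num)).1 h2

lemma mem_IA {ℓ k : ℕ} {a n : Fin ℓ → ℕ} {f : PA ℓ k} (hf : f ∈ invPA ℓ k a n)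
    {D : ((Fin ℓ ⊕ Fin k) ⊕ (Fin ℓ ⊕ Fin k)) →₀ ℕ} (hD : D ∈ f.support) : IA a n D := by
  classical
  intro i
  have h := hf (Function.update 1 i 2) (by
    intro j; by_cases hj : j = i
    · subst hj; simp
    · simp [hj])
  have h1 := congrArg (coeff D) h
  rw [actPA_eq, h_diag_coeff, wA_prod, Fintype.prod_eq_single i] at h1
  · have h2 := mul_eq_right₀ (mem_support_iff.1 hD) |>.1 h1
    rw [Function.update_self] at h2
    have := h_two h2
    linarith
  · intro j hj; simp [hj]
  · intro j; by_cases hj : j = i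
    · subst hj; simp
    · simp [hj]

lemma mem_IB {k : ℕ} {α β : ℕ} {f : PB k} (hf : f ∈ invPB k α β)
    {D : ((Unit ⊕ Fin k) ⊕ (Unit ⊕ Fin k)) →₀ ℕ} (hD : D ∈ f.support) : IB α β D := by
  have h1 := congrArg (coeff D) (hf 2 two_ne_zero)
  rw [actPB_eq, h_diag_coeff, wB_prod _ _ _ two_ne_zero] at h1
  have h2 := mul_eq_right₀ (mem_support_iff.1 hD) |>.1 h1
  have := h_two h2
  unfold IB
  linarith

/-- image exponent -/
noncomputable def phE {ℓ k : ℕ} (D : ((Fin ℓ ⊕ Fin k) ⊕ (Fin ℓ ⊕ Fin k)) →₀ ℕ) :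
    ((Unit ⊕ Fin k) ⊕ (Unit ⊕ Fin k)) →₀ ℕ :=
  Finsupp.equivFunOnFinite.symm fun x => match x with
    | Sum.inl (Sum.inl _) => ∑ i, D (Sum.inl (Sum.inl i))
    | Sum.inl (Sum.inr j) => D (Sum.inl (Sum.inr j))
    | Sum.inr (Sum.inl _) => ∑ i, D (Sum.inr (Sum.inl i))
    | Sum.inr (Sum.inr j) => D (Sum.inr (Sum.inr j))

noncomputable def gam {ℓ : ℕ} (m : Fin ℓ → ℕ) (β : ℕ) (i : Fin ℓ) : ℂ :=
  ((Real.sqrt ((m i : ℝ) / (β : ℝ)) : ℝ) : ℂ)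

lemma gam_sq {ℓ : ℕ} (m : Fin ℓ → ℕ) (β : ℕ) (i : Fin ℓ) :
    gam m β i * gam m β i = (m i : ℂ) / β := by
  unfold gam
  rw [← Complex.ofReal_mul, Real.mul_self_sqrt (by positivity)]
  push_cast; rfl

noncomputable def cD {ℓ k : ℕ} (m : Fin ℓ → ℕ) (β : ℕ)
    (D : ((Fin ℓ ⊕ Fin k) ⊕ (Fin ℓ ⊕ Fin k)) →₀ ℕ) : ℂ :=
  ∏ i, gam m β i ^ (D (Sum.inl (Sum.inl i)) + D (Sum.inr (Sum.inl i)))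

lemma Phi_mon {ℓ k : ℕ} (m : Fin ℓ → ℕ) (β : ℕ)
    (D : ((Fin ℓ ⊕ Fin k) ⊕ (Fin ℓ ⊕ Fin k)) →₀ ℕ) :
    PhiZero ℓ k m β (monomial D 1) = cD m β D • monomial (phE D) 1 := by
  rw [monomial_eq (s := phE D), Finsupp.prod_fintype _ _ (fun _ => pow_zero _), PhiZero,
    aeval_monomial, Finsupp.prod_fintype _ _ (fun _ => pow_zero _)]
  simp only [Fintype.prod_sum_type, mul_pow, Finset.prod_mul_distrib, phE, smul_eq_C_mul, cD,
    pow_add, map_mul, map_prod, map_pow, gam, Finsupp.equivFunOnFinite_symm_apply_apply,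
    Finset.prod_pow_eq_pow_sum, Fintype.prod_unique, map_one]
  ring

lemma phE_degree {ℓ k : ℕ} (D : ((Fin ℓ ⊕ Fin k) ⊕ (Fin ℓ ⊕ Fin k)) →₀ ℕ) :
    (phE D).degree = D.degree := by
  rw [Finsupp.degree_eq_sum, Finsupp.degree_eq_sum]
  simp [Fintype.sum_sum_type, phE]


noncomputable def baseE {ℓ k : ℕ} (D : ((Fin ℓ ⊕ Fin k) ⊕ (Fin ℓ ⊕ Fin k)) →₀ ℕ) :
    ((Fin ℓ ⊕ Fin k) ⊕ (Fin ℓ ⊕ Fin k)) →₀ ℕ :=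
  Finsupp.equivFunOnFinite.symm fun x => match x with
    | Sum.inl (Sum.inl i) => D (Sum.inl (Sum.inl i)) - D (Sum.inr (Sum.inl i))
    | Sum.inl (Sum.inr j) => D (Sum.inl (Sum.inr j))
    | Sum.inr (Sum.inl i) => D (Sum.inr (Sum.inl i)) - D (Sum.inl (Sum.inl i))
    | Sum.inr (Sum.inr j) => D (Sum.inr (Sum.inr j))

def xE {ℓ k : ℕ} (D : ((Fin ℓ ⊕ Fin k) ⊕ (Fin ℓ ⊕ Fin k)) →₀ ℕ) (i : Fin ℓ) : ℕ :=
  min (D (Sum.inl (Sum.inl i))) (D (Sum.inr (Sum.inl i)))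

lemma IA_base {ℓ k : ℕ} {a n : Fin ℓ → ℕ} {D : ((Fin ℓ ⊕ Fin k) ⊕ (Fin ℓ ⊕ Fin k)) →₀ ℕ}
    (h : IA a n D) : IA a n (baseE D) := by
  intro i
  have := h i
  simp only [baseE, Finsupp.equivFunOnFinite_symm_apply_apply]
  rw [← this]
  congr 1
  omega

lemma y_mem (ℓ k : ℕ) (a n : Fin ℓ → ℕ) (i : Fin ℓ) :
    (X (Sum.inl (Sum.inl i)) * X (Sum.inr (Sum.inl i)) : PA ℓ k) ∈ invPA ℓ k a n := by
  intro t ht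
  simp only [actPA, map_mul, aeval_X]
  have : (C (t i ^ (-(a i : ℤ))) * C (t i ^ (a i : ℤ)) : PA ℓ k) = 1 := by
    rw [← C_mul, ← zpow_add₀ (ht i)]; simp
  linear_combination (X (Sum.inl (Sum.inl i)) * X (Sum.inr (Sum.inl i)) : PA ℓ k) * this

lemma S_mem (ℓ k : ℕ) (a n : Fin ℓ → ℕ) :
    (∑ j, X (Sum.inl (Sum.inr j)) * X (Sum.inr (Sum.inr j)) : PA ℓ k) ∈ invPA ℓ k a n := by
  refine sum_mem fun j _ => ?_
  intro t ht
  simp only [actPA, map_mul, aeval_X]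
  have h0 : (∏ i, t i ^ n i) ≠ 0 := Finset.prod_ne_zero_iff.2 fun i _ => pow_ne_zero _ (ht i)
  have : (C (∏ i, t i ^ n i) * C ((∏ i, t i ^ n i)⁻¹) : PA ℓ k) = 1 := by
    rw [← C_mul, mul_inv_cancel₀ h0, C_1]
  linear_combination (X (Sum.inl (Sum.inr j)) * X (Sum.inr (Sum.inr j)) : PA ℓ k) * this

lemma JA_mem (ℓ k : ℕ) (a n : Fin ℓ → ℕ) (i : Fin ℓ) : JA ℓ k a n i ∈ invPA ℓ k a n := by
  unfold JA
  rw [mul_assoc]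
  exact add_mem (neg_mem (mul_mem (Subalgebra.algebraMap_mem _ _) (y_mem ℓ k a n i)))
    (mul_mem (Subalgebra.algebraMap_mem _ _) (S_mem ℓ k a n))

lemma mon_base {ℓ k : ℕ} (D : ((Fin ℓ ⊕ Fin k) ⊕ (Fin ℓ ⊕ Fin k)) →₀ ℕ) :
    (monomial D 1 : PA ℓ k) = monomial (baseE D) 1 *
      ∏ i, (X (Sum.inl (Sum.inl i)) * X (Sum.inr (Sum.inl i))) ^ xE D i := by
  rw [monomial_eq (s := baseE D), monomial_eq (s := D),
    Finsupp.prod_fintype _ _ (fun _ => pow_zero _), Finsupp.prod_fintype _ _ (fun _ => pow_zero _)]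
  simp only [Fintype.prod_sum_type, mul_pow, Finset.prod_mul_distrib, baseE,
    Finsupp.equivFunOnFinite_symm_apply_apply]
  have h1 : ∏ i, (X (Sum.inl (Sum.inl i)) : PA ℓ k) ^ D (Sum.inl (Sum.inl i)) =
      (∏ i, X (Sum.inl (Sum.inl i)) ^ (D (Sum.inl (Sum.inl i)) - D (Sum.inr (Sum.inl i)))) *
        ∏ i, X (Sum.inl (Sum.inl i)) ^ xE D i := by
    rw [← Finset.prod_mul_distrib]
    refine Finset.prod_congr rfl fun i _ => ?_
    rw [← pow_add]; congr 1; unfold xE; omega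
  have h2 : ∏ i, (X (Sum.inr (Sum.inl i)) : PA ℓ k) ^ D (Sum.inr (Sum.inl i)) =
      (∏ i, X (Sum.inr (Sum.inl i)) ^ (D (Sum.inr (Sum.inl i)) - D (Sum.inl (Sum.inl i)))) *
        ∏ i, X (Sum.inr (Sum.inl i)) ^ xE D i := by
    rw [← Finset.prod_mul_distrib]
    refine Finset.prod_congr rfl fun i _ => ?_
    rw [← pow_add]; congr 1; unfold xE; omega
  rw [h1, h2]
  ring

lemma cD_base {ℓ k : ℕ} (m : Fin ℓ → ℕ) (β : ℕ)
    (D : ((Fin ℓ ⊕ Fin k) ⊕ (Fin ℓ ⊕ Fin k)) →₀ ℕ) :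
    cD m β D = cD m β (baseE D) * ∏ i, (gam m β i * gam m β i) ^ xE D i := by
  unfold cD
  rw [← Finset.prod_mul_distrib]
  refine Finset.prod_congr rfl fun i _ => ?_
  rw [← pow_two, ← pow_mul, ← pow_add]
  congr 1
  simp only [baseE, Finsupp.equivFunOnFinite_symm_apply_apply, xE]
  omega

lemma cD_ne {ℓ k : ℕ} {m : Fin ℓ → ℕ} {β : ℕ} (hm : ∀ i, 0 < m i) (hβ : 0 < β)
    (D : ((Fin ℓ ⊕ Fin k) ⊕ (Fin ℓ ⊕ Fin k)) →₀ ℕ) : cD m β D ≠ 0 := by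
  refine Finset.prod_ne_zero_iff.2 fun i _ => pow_ne_zero _ ?_
  intro h
  have h2 := gam_sq m β i
  rw [h, zero_mul] at h2
  have := hm i
  have h3 : (m i : ℂ) ≠ 0 := by exact_mod_cast this.ne'
  have h4 : (β : ℂ) ≠ 0 := by exact_mod_cast hβ.ne'
  exact div_ne_zero h3 h4 h2.symm

lemma mk_y {ℓ k : ℕ} {a n m : Fin ℓ → ℕ} {α β : ℕ} (ha : ∀ i, 0 < a i)
    (hα : 0 < α) (hβ : 0 < β) (ham : ∀ i, a i * m i = n i * α) (i : Fin ℓ) :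
    Ideal.Quotient.mk (idealA ℓ k a n) ⟨_, y_mem ℓ k a n i⟩ =
      (gam m β i * gam m β i) • (((β : ℂ) / α) •
        Ideal.Quotient.mk (idealA ℓ k a n) ⟨_, S_mem ℓ k a n⟩) := by
  have h : (⟨_, JA_mem ℓ k a n i⟩ : invPA ℓ k a n) ∈ idealA ℓ k a n :=
    Ideal.subset_span ⟨i, rfl⟩
  have h1 : (⟨_, JA_mem ℓ k a n i⟩ : invPA ℓ k a n) =
      -((a i : ℂ) • ⟨_, y_mem ℓ k a n i⟩) + (n i : ℂ) • ⟨_, S_mem ℓ k a n⟩ := by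
    apply Subtype.ext
    simp only [JA, Subalgebra.coe_add, Subalgebra.coe_neg, Subalgebra.coe_smul, smul_eq_C_mul,
      mul_assoc]
  rw [← Ideal.Quotient.eq_zero_iff_mem, h1, map_add, map_neg] at h
  change -((a i : ℂ) • Ideal.Quotient.mk (idealA ℓ k a n) ⟨_, y_mem ℓ k a n i⟩)
    + (n i : ℂ) • Ideal.Quotient.mk (idealA ℓ k a n) ⟨_, S_mem ℓ k a n⟩ = 0 at h
  have hai : (a i : ℂ) ≠ 0 := by exact_mod_cast (ha i).ne'
  have hα' : (α : ℂ) ≠ 0 := by exact_mod_cast hα.ne'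
  have hβ' : (β : ℂ) ≠ 0 := by exact_mod_cast hβ.ne'
  have h2 : (a i : ℂ) * m i = n i * α := by exact_mod_cast ham i
  have h3 : (gam m β i * gam m β i) * ((β : ℂ) / α) = (a i : ℂ)⁻¹ * n i := by
    rw [gam_sq]; field_simp; linear_combination h2
  rw [smul_smul, h3, mul_smul, ← neg_add_eq_zero.1 h, smul_smul, inv_mul_cancel₀ hai, one_smul]

lemma h_gen {ι A : Type*} [Fintype ι] [CommRing A] [Algebra ℂ A] (c : ℂ) (g : ι → ℂ) (x : ι → ℕ)
    (M Z : A) : c • (M * ∏ i, (g i ^ x i • Z ^ x i)) = (c * ∏ i, g i ^ x i) • (M * Z ^ ∑ i, x i) := by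
  rw [← Finset.prod_pow_eq_pow_sum, mul_smul, Finset.prod_smul, mul_smul_comm]

lemma mk_nf {ℓ k : ℕ} {a n m : Fin ℓ → ℕ} {α β : ℕ} (ha : ∀ i, 0 < a i)
    (hα : 0 < α) (hβ : 0 < β) (ham : ∀ i, a i * m i = n i * α)
    {D : ((Fin ℓ ⊕ Fin k) ⊕ (Fin ℓ ⊕ Fin k)) →₀ ℕ} (h : IA a n D) :
    cD m β (baseE D) • Ideal.Quotient.mk (idealA ℓ k a n) ⟨_, IA_mem h⟩ =
      cD m β D • (Ideal.Quotient.mk (idealA ℓ k a n) ⟨_, IA_mem (IA_base h)⟩ *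
        (((β : ℂ) / α) • Ideal.Quotient.mk (idealA ℓ k a n) ⟨_, S_mem ℓ k a n⟩) ^ ∑ i, xE D i) := by
  have h1 : (⟨_, IA_mem h⟩ : invPA ℓ k a n) = ⟨_, IA_mem (IA_base h)⟩ *
      ∏ i, (⟨_, y_mem ℓ k a n i⟩ : invPA ℓ k a n) ^ xE D i := by
    apply Subtype.ext
    rw [Subalgebra.coe_mul, ← Subalgebra.coe_val, map_prod]
    simp only [map_pow]
    exact mon_base D
  rw [h1, map_mul, map_prod]
  simp only [map_pow, mk_y ha hα hβ ham]
  simp only [smul_pow (gam m β _ * gam m β _)]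
  rw [cD_base m β D]
  exact h_gen _ _ _ _ _

lemma mk_key {ℓ k : ℕ} {a n m : Fin ℓ → ℕ} {α β : ℕ} (ha : ∀ i, 0 < a i)
    (hα : 0 < α) (hβ : 0 < β) (hm : ∀ i, 0 < m i) (ham : ∀ i, a i * m i = n i * α)
    {D D' : ((Fin ℓ ⊕ Fin k) ⊕ (Fin ℓ ⊕ Fin k)) →₀ ℕ} (h : IA a n D) (h' : IA a n D')
    (hph : phE D = phE D') :
    cD m β D' • Ideal.Quotient.mk (idealA ℓ k a n) ⟨_, IA_mem h⟩ =
      cD m β D • Ideal.Quotient.mk (idealA ℓ k a n) ⟨_, IA_mem h'⟩ := by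
  have e1 : ∀ j, D (Sum.inl (Sum.inr j)) = D' (Sum.inl (Sum.inr j)) := fun j => by
    simpa [phE] using DFunLike.congr_fun hph (Sum.inl (Sum.inr j))
  have e2 : ∀ j, D (Sum.inr (Sum.inr j)) = D' (Sum.inr (Sum.inr j)) := fun j => by
    simpa [phE] using DFunLike.congr_fun hph (Sum.inr (Sum.inr j))
  have e3 : ∑ i, D (Sum.inl (Sum.inl i)) = ∑ i, D' (Sum.inl (Sum.inl i)) := by
    simpa [phE] using DFunLike.congr_fun hph (Sum.inl (Sum.inl ()))
  have e4 : ∀ i, (D (Sum.inl (Sum.inl i)) : ℤ) - D (Sum.inr (Sum.inl i)) =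
      D' (Sum.inl (Sum.inl i)) - D' (Sum.inr (Sum.inl i)) := fun i => by
    have u := h i
    simp only [e1, e2] at u
    rw [← h' i] at u
    exact mul_left_cancel₀ (by exact_mod_cast (ha i).ne') u
  have hb : baseE D = baseE D' := by
    ext x
    rcases x with (i | j) | (i | j)
    · have := e4 i; simp [baseE]; omega
    · simp [baseE, e1]
    · have := e4 i; simp [baseE]; omega
    · simp [baseE, e2]
  have hx : ∑ i, xE D i = ∑ i, xE D' i := by
    have u : ∀ E : ((Fin ℓ ⊕ Fin k) ⊕ (Fin ℓ ⊕ Fin k)) →₀ ℕ,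
        ∑ i, E (Sum.inl (Sum.inl i)) = ∑ i, xE E i + ∑ i, baseE E (Sum.inl (Sum.inl i)) := by
      intro E
      rw [← Finset.sum_add_distrib]
      refine Finset.sum_congr rfl fun i _ => ?_
      simp [baseE, xE]; omega
    have := u D
    have := u D'
    rw [hb] at *
    omega
  have n1 := mk_nf (k := k) (m := m) ha hα hβ ham h
  have n2 := mk_nf (k := k) (m := m) ha hα hβ ham h'
  simp only [hb, hx] at n1
  have hne := cD_ne hm hβ (baseE D')
  have n3 : cD m β (baseE D') •
      (cD m β D' • Ideal.Quotient.mk (idealA ℓ k a n) ⟨_, IA_mem h⟩) =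
      cD m β (baseE D') • (cD m β D • Ideal.Quotient.mk (idealA ℓ k a n) ⟨_, IA_mem h'⟩) := by
    rw [smul_comm, n1, smul_comm (cD m β (baseE D')), n2, smul_comm]
  have n4 := congrArg (fun z => (cD m β (baseE D'))⁻¹ • z) n3
  simp only [inv_smul_smul₀ hne] at n4
  exact n4

lemma ex_lift {ℓ k : ℕ} {a n m : Fin ℓ → ℕ} {α β : ℕ} (i0 : Fin ℓ)
    (ham : ∀ i, a i * m i = n i * α) (hα : 0 < α) (hβ : β = ∑ i, m i) (hco : Nat.Coprime α β)
    {D : ((Unit ⊕ Fin k) ⊕ (Unit ⊕ Fin k)) →₀ ℕ} (h : IB α β D) :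
    ∃ D' : ((Fin ℓ ⊕ Fin k) ⊕ (Fin ℓ ⊕ Fin k)) →₀ ℕ, IA a n D' ∧ phE D' = D := by
  classical
  unfold IB at h
  have hd : (α : ℤ) ∣ ∑ j, (D (Sum.inl (Sum.inr j)) : ℤ) - ∑ j, (D (Sum.inr (Sum.inr j)) : ℤ) :=
    IsCoprime.dvd_of_dvd_mul_left (Nat.isCoprime_iff_coprime.2 hco) (Dvd.intro _ h)
  obtain ⟨e, he⟩ := hd
  have hα' : (α : ℤ) ≠ 0 := by exact_mod_cast hα.ne'
  have hpq : (D (Sum.inl (Sum.inl ())) : ℤ) - D (Sum.inr (Sum.inl ())) = β * e := by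
    apply mul_left_cancel₀ hα'
    rw [h, he]; ring
  have ham' : ∀ i, (a i : ℤ) * m i = n i * α := fun i => by exact_mod_cast ham i
  obtain ⟨N, rfl | rfl⟩ := Int.eq_nat_or_neg e
  · refine ⟨Finsupp.equivFunOnFinite.symm fun x => match x with
      | Sum.inl (Sum.inl i) => m i * N + if i = i0 then D (Sum.inr (Sum.inl ())) else 0
      | Sum.inl (Sum.inr j) => D (Sum.inl (Sum.inr j))
      | Sum.inr (Sum.inl i) => if i = i0 then D (Sum.inr (Sum.inl ())) else 0
      | Sum.inr (Sum.inr j) => D (Sum.inr (Sum.inr j)), ?_, ?_⟩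
    · intro i
      simp only [Finsupp.equivFunOnFinite_symm_apply_apply]
      rw [he]
      push_cast
      linear_combination (N : ℤ) * ham' i
    · ext x
      rcases x with (i | j) | (i | j)
      · simp [phE, Finset.sum_add_distrib, ← Finset.sum_mul, ← hβ]
        zify
        linarith
      · simp [phE]
      · simp [phE]
      · simp [phE]
  · refine ⟨Finsupp.equivFunOnFinite.symm fun x => match x with
      | Sum.inl (Sum.inl i) => if i = i0 then D (Sum.inl (Sum.inl ())) else 0
      | Sum.inl (Sum.inr j) => D (Sum.inl (Sum.inr j))
      | Sum.inr (Sum.inl i) => m i * N + if i = i0 then D (Sum.inl (Sum.inl ())) else 0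
      | Sum.inr (Sum.inr j) => D (Sum.inr (Sum.inr j)), ?_, ?_⟩
    · intro i
      simp only [Finsupp.equivFunOnFinite_symm_apply_apply]
      rw [he]
      push_cast
      linear_combination (-N : ℤ) * ham' i
    · ext x
      rcases x with (i | j) | (i | j)
      · simp [phE]
      · simp [phE]
      · simp [phE, Finset.sum_add_distrib, ← Finset.sum_mul, ← hβ]
        zify
        linarith
      · simp [phE]

open Classical in
/-- the linear section -/
noncomputable def secL {ℓ k : ℕ} (a n m : Fin ℓ → ℕ) (β : ℕ) : PB k →ₗ[ℂ] invPA ℓ k a n :=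
  (basisMonomials _ ℂ).constr ℂ fun D =>
    if h : ∃ D' : ((Fin ℓ ⊕ Fin k) ⊕ (Fin ℓ ⊕ Fin k)) →₀ ℕ, IA a n D' ∧ phE D' = D then
      (cD m β h.choose)⁻¹ • ⟨_, IA_mem h.choose_spec.1⟩ else 0

lemma secL_mon {ℓ k : ℕ} {a n m : Fin ℓ → ℕ} {β : ℕ}
    {D : ((Unit ⊕ Fin k) ⊕ (Unit ⊕ Fin k)) →₀ ℕ}
    (h : ∃ D' : ((Fin ℓ ⊕ Fin k) ⊕ (Fin ℓ ⊕ Fin k)) →₀ ℕ, IA a n D' ∧ phE D' = D) :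
    ∃ (D' : ((Fin ℓ ⊕ Fin k) ⊕ (Fin ℓ ⊕ Fin k)) →₀ ℕ) (hI : IA a n D'), phE D' = D ∧
      secL a n m β (monomial D 1) = (cD m β D')⁻¹ • ⟨_, IA_mem hI⟩ := by
  classical
  refine ⟨h.choose, h.choose_spec.1, h.choose_spec.2, ?_⟩
  have := (basisMonomials ((Unit ⊕ Fin k) ⊕ (Unit ⊕ Fin k)) ℂ).constr_basis ℂ (fun D =>
    if h : ∃ D' : ((Fin ℓ ⊕ Fin k) ⊕ (Fin ℓ ⊕ Fin k)) →₀ ℕ, IA a n D' ∧ phE D' = D then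
      (cD m β h.choose)⁻¹ • (⟨_, IA_mem h.choose_spec.1⟩ : invPA ℓ k a n) else 0) D
  rw [coe_basisMonomials] at this
  unfold secL
  rw [dif_pos h] at this
  convert! this

open Classical in
noncomputable def prE {ℓ k : ℕ} (a n : Fin ℓ → ℕ) : PA ℓ k →ₗ[ℂ] invPA ℓ k a n :=
  (basisMonomials _ ℂ).constr ℂ fun D =>
    if h : IA a n D then ⟨_, IA_mem h⟩ else 0

lemma prE_mon {ℓ k : ℕ} {a n : Fin ℓ → ℕ} {D : ((Fin ℓ ⊕ Fin k) ⊕ (Fin ℓ ⊕ Fin k)) →₀ ℕ}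
    (h : IA a n D) : prE a n (monomial D 1) = ⟨_, IA_mem h⟩ := by
  classical
  have := (basisMonomials ((Fin ℓ ⊕ Fin k) ⊕ (Fin ℓ ⊕ Fin k)) ℂ).constr_basis ℂ (fun D =>
    if h : IA a n D then (⟨_, IA_mem h⟩ : invPA ℓ k a n) else 0) D
  rw [coe_basisMonomials] at this
  unfold prE
  rw [dif_pos h] at this
  convert! this

lemma prE_self {ℓ k : ℕ} {a n : Fin ℓ → ℕ} (f : invPA ℓ k a n) : prE a n (f : PA ℓ k) = f := by
  apply Subtype.ext
  refine h_lin_ext ((invPA ℓ k a n).val.toLinearMap ∘ₗ prE a n) LinearMap.id (f : PA ℓ k) ?_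
  intro D hD
  simp [prE_mon (mem_IA f.2 hD)]

lemma Phi_sec {ℓ k : ℕ} {a n m : Fin ℓ → ℕ} {α β : ℕ} (i0 : Fin ℓ)
    (ham : ∀ i, a i * m i = n i * α) (hα : 0 < α) (hβ : β = ∑ i, m i) (hβ0 : 0 < β)
    (hm : ∀ i, 0 < m i) (hco : Nat.Coprime α β) (g : invPB k α β) :
    PhiZero ℓ k m β (secL a n m β (g : PB k) : PA ℓ k) = g := by
  refine h_lin_ext ((PhiZero ℓ k m β).toLinearMap ∘ₗ (invPA ℓ k a n).val.toLinearMap ∘ₗ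
    secL a n m β) LinearMap.id (g : PB k) ?_
  intro D hD
  obtain ⟨D', hI, hp, hs⟩ := secL_mon (m := m) (β := β)
    (ex_lift i0 ham hα hβ hco (mem_IB g.2 hD))
  simp only [LinearMap.comp_apply, AlgHom.toLinearMap_apply, hs, map_smul, LinearMap.id_apply]
  change (cD m β D')⁻¹ • PhiZero ℓ k m β (monomial D' 1) = _
  rw [Phi_mon, smul_smul, inv_mul_cancel₀ (cD_ne hm hβ0 D'), one_smul, hp]

lemma sec_Phi {ℓ k : ℕ} {a n m : Fin ℓ → ℕ} {α β : ℕ} (ha : ∀ i, 0 < a i)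
    (ham : ∀ i, a i * m i = n i * α) (hα : 0 < α) (hβ0 : 0 < β)
    (hm : ∀ i, 0 < m i) (f : invPA ℓ k a n) :
    Ideal.Quotient.mk (idealA ℓ k a n) (secL a n m β (PhiZero ℓ k m β (f : PA ℓ k)))
      = Ideal.Quotient.mk (idealA ℓ k a n) f := by
  conv_rhs => rw [← prE_self f]
  refine h_lin_ext ((Ideal.Quotient.mkₐ ℂ (idealA ℓ k a n)).toLinearMap ∘ₗ secL a n m β ∘ₗ
    (PhiZero ℓ k m β).toLinearMap)
    ((Ideal.Quotient.mkₐ ℂ (idealA ℓ k a n)).toLinearMap ∘ₗ prE a n) (f : PA ℓ k) ?_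
  intro D hD
  have hI := mem_IA f.2 hD
  obtain ⟨D', hI', hp, hs⟩ := secL_mon (m := m) (β := β) ⟨D, hI, rfl⟩
  simp only [LinearMap.comp_apply, AlgHom.toLinearMap_apply, Phi_mon, hs, map_smul, prE_mon hI]
  have := mk_key ha hα hβ0 hm ham hI' hI hp
  simp only [Ideal.Quotient.mkₐ_eq_mk]
  rw [smul_comm, this, smul_smul, inv_mul_cancel₀ (cD_ne hm hβ0 D'), one_smul]

lemma sec_hom {ℓ k : ℕ} {a n m : Fin ℓ → ℕ} {α β : ℕ} (i0 : Fin ℓ)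
    (ham : ∀ i, a i * m i = n i * α) (hα : 0 < α) (hβ : β = ∑ i, m i)
    (hco : Nat.Coprime α β) (g : invPB k α β) (d : ℕ) (hg : (g : PB k).IsHomogeneous d) :
    (secL a n m β (g : PB k) : PA ℓ k).IsHomogeneous d := by
  rw [← mem_homogeneousSubmodule]
  have h1 : (secL a n m β (g : PB k) : PA ℓ k) = ((invPA ℓ k a n).val.toLinearMap ∘ₗ
    secL a n m β) (g : PB k) := rfl
  rw [h1, (g : PB k).as_sum, map_sum]
  refine Submodule.sum_mem _ fun D hD => ?_
  obtain ⟨D', hI, hp, hs⟩ := secL_mon (m := m) (β := β)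
    (ex_lift i0 ham hα hβ hco (mem_IB g.2 hD))
  have h2 : (monomial D (coeff D (g : PB k)) : PB k) = coeff D (g : PB k) • monomial D 1 := by
    rw [smul_monomial, smul_eq_mul, mul_one]
  rw [h2, map_smul]
  refine Submodule.smul_mem _ _ ?_
  simp only [LinearMap.comp_apply, AlgHom.toLinearMap_apply, hs, map_smul]
  refine Submodule.smul_mem _ _ ?_
  rw [mem_homogeneousSubmodule]
  apply isHomogeneous_monomial
  rw [← phE_degree, hp]
  have := hg (mem_support_iff.1 hD)
  rw [Finsupp.degree_eq_weight_one]
  exact this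

lemma Phi_hom {ℓ k : ℕ} (m : Fin ℓ → ℕ) (β : ℕ) (f : PA ℓ k) (d : ℕ) (hf : f.IsHomogeneous d) :
    (PhiZero ℓ k m β f).IsHomogeneous d := by
  have := hf.aeval (n := 1) (fun x => PhiZero ℓ k m β (X x)) (by
    rintro ((i | j) | (i | j)) <;> simp only [PhiZero, aeval_X]
    · exact isHomogeneous_C_mul_X _ _
    · exact isHomogeneous_X _ _
    · exact isHomogeneous_C_mul_X _ _
    · exact isHomogeneous_X _ _)
  rw [one_mul] at this
  convert this
  apply MvPolynomial.algHom_ext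
  intro x
  simp

lemma Phi_inv {ℓ k : ℕ} {a n m : Fin ℓ → ℕ} {α β : ℕ} (r : Fin ℓ → ℕ)
    (har : ∀ i, a i * r i = α) (hnr : ∀ i, n i * r i = m i) (hβ : β = ∑ i, m i)
    (f : PA ℓ k) (hf : f ∈ invPA ℓ k a n) : PhiZero ℓ k m β f ∈ invPB k α β := by
  intro t ht
  have h := hf (fun i => t ^ r i) (fun i => pow_ne_zero _ ht)
  have hP : ∏ i, (t ^ r i) ^ n i = t ^ β := by
    rw [hβ, ← Finset.prod_pow_eq_pow_sum]
    refine Finset.prod_congr rfl fun i _ => ?_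
    rw [← pow_mul, mul_comm, hnr]
  have hA : ∀ i, (t ^ r i) ^ a i = t ^ α := fun i => by rw [← pow_mul, mul_comm, har]
  have hc : (actPB k α β t).comp (PhiZero ℓ k m β) =
      (PhiZero ℓ k m β).comp (actPA ℓ k a n (fun i => t ^ r i)) := by
    apply MvPolynomial.algHom_ext
    rintro ((i | j) | (i | j)) <;>
      simp only [AlgHom.comp_apply, actPA, PhiZero, actPB, aeval_X, map_mul, algHom_C,
        algebraMap_eq, zpow_neg, zpow_natCast, hP, hA] <;> ring
  have := DFunLike.congr_fun hc f
  rw [AlgHom.comp_apply, AlgHom.comp_apply, h] at this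
  exact this

lemma Phi_JA {ℓ k : ℕ} {a n m : Fin ℓ → ℕ} {α β : ℕ} (hβ0 : 0 < β)
    (ham : ∀ i, a i * m i = n i * α) (i : Fin ℓ) :
    PhiZero ℓ k m β (JA ℓ k a n i) = ((n i : ℂ) / β) • JB k α β := by
  have hβ' : (β : ℂ) ≠ 0 := by exact_mod_cast hβ0.ne'
  have h2 : (a i : ℂ) * m i = n i * α := by exact_mod_cast ham i
  have h1 : (C (a i : ℂ) * C (gam m β i) * C (gam m β i) : PB k) = C ((n i : ℂ) / β) * C (α : ℂ) := by
    rw [← C_mul, ← C_mul, ← C_mul, mul_assoc, gam_sq]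
    congr 1
    field_simp
    linear_combination h2
  have h3 : (C (n i : ℂ) : PB k) = C ((n i : ℂ) / β) * C (β : ℂ) := by
    rw [← C_mul, div_mul_cancel₀ _ hβ']
  unfold gam at h1
  simp only [JA, JB, smul_eq_C_mul, PhiZero, map_add, map_neg, map_mul, map_sum, aeval_X, algHom_C,
    algebraMap_eq]
  rw [h3]
  linear_combination (-(X (Sum.inl (Sum.inl ())) * X (Sum.inr (Sum.inl ()))) : PB k) * h1

lemma cc_eq {ℓ : ℕ} (m : Fin ℓ → ℕ) (β : ℕ) (hβ : β = ∑ i, m i) :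
    ((Real.sqrt ((β : ℝ) ^ (-(β : ℤ)) * ∏ j, (m j : ℝ) ^ m j) : ℝ) : ℂ) = ∏ i, gam m β i ^ m i := by
  unfold gam
  rw [← Complex.ofReal_inj.2 (show (∏ i, Real.sqrt ((m i : ℝ) / β) ^ m i) = _ from ?_)]
  · push_cast; rfl
  · rw [eq_comm, Real.sqrt_eq_iff_mul_self_eq (by positivity) (by positivity),
      ← Finset.prod_mul_distrib]
    simp only [← mul_pow]
    have : ∀ i, Real.sqrt ((m i : ℝ) / β) * Real.sqrt ((m i : ℝ) / β) = (m i : ℝ) / β :=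
      fun i => Real.mul_self_sqrt (by positivity)
    simp only [this, div_pow, Finset.prod_div_distrib, Finset.prod_pow_eq_pow_sum, ← hβ,
      zpow_neg, zpow_natCast]
    rw [div_eq_inv_mul]

lemma copr {ℓ : ℕ} {a n r : Fin ℓ → ℕ} {α : ℕ} (hr : ∀ i, a i * r i = α)
    (hα : α = ∏ i, a i) (ha : ∀ i, 0 < a i)
    (hF1 : ∀ i j, i ≠ j → Nat.gcd (a i) (a j) = 1)
    (hF2 : ∀ i, Nat.gcd (a i) (n i) = 1) : Nat.Coprime α (∑ i, n i * r i) := by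
  classical
  rw [hα]
  refine Nat.Coprime.prod_left fun i _ => ?_
  have hri : ∀ i, r i = ∏ j ∈ Finset.univ.erase i, a j := fun i => by
    apply Nat.eq_of_mul_eq_mul_left (ha i)
    rw [hr, hα, Finset.mul_prod_erase _ _ (Finset.mem_univ i)]
  rw [← Finset.add_sum_erase _ _ (Finset.mem_univ i)]
  obtain ⟨c, hc⟩ : a i ∣ ∑ j ∈ Finset.univ.erase i, n j * r j := by
    refine Finset.dvd_sum fun j hj => Dvd.dvd.mul_left ?_ _
    rw [hri]
    exact Finset.dvd_prod_of_mem a (Finset.mem_erase.2 ⟨(Finset.ne_of_mem_erase hj).symm, Finset.mem_univ _⟩)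
  rw [hc, Nat.coprime_add_mul_left_right]
  refine Nat.Coprime.mul_right (hF2 i) ?_
  rw [hri]
  exact Nat.Coprime.prod_right fun j hj => hF1 i j (Finset.ne_of_mem_erase hj).symm

end helpers

set_option maxHeartbeats 1600000 in
/-- the map `Φ` is well defined on the generating invariants as stated,
maps invariants to invariants, and descends to a degree-preserving isomorphism of graded
ℂ-algebras `P_A^{inv}/(J_{A,1},…,J_{A,ℓ}) → P_B^{inv}/(J_B)`. -/
theorem stmt13 (ℓ k : ℕ) (hℓ : 1 ≤ ℓ) (hk : 1 ≤ k)
    (a n : Fin ℓ → ℕ)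
    (ha : ∀ i, 0 < a i) (hn : ∀ i, 0 < n i)
    (hF1 : ∀ i j, i ≠ j → Nat.gcd (a i) (a j) = 1)
    (hF2 : ∀ i, Nat.gcd (a i) (n i) = 1) :
    let α : ℕ := Finset.univ.lcm a
    let m : Fin ℓ → ℕ := fun i => n i * α / a i
    let β : ℕ := ∑ i, m i
    let Cconst : ℂ := ((Real.sqrt ((β : ℝ) ^ (-(β : ℤ)) * ∏ j, (m j : ℝ) ^ m j) : ℝ) : ℂ)
    -- Φ is given on the generators as stated:
    (∀ i, PhiZero ℓ k m β (X (Sum.inl (Sum.inl i)) * X (Sum.inr (Sum.inl i)))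
        = C ((m i : ℂ) / (β : ℂ)) * (X (Sum.inl (Sum.inl ())) * X (Sum.inr (Sum.inl ()))))
    ∧
    (∀ i j : Fin k, PhiZero ℓ k m β (X (Sum.inl (Sum.inr i)) * X (Sum.inr (Sum.inr j)))
        = X (Sum.inl (Sum.inr i)) * X (Sum.inr (Sum.inr j)))
    ∧
    (∀ s : Fin k → ℕ, (∑ j, s j) = α →
      PhiZero ℓ k m β ((∏ i, X (Sum.inl (Sum.inl i)) ^ m i) * ∏ j, X (Sum.inl (Sum.inr j)) ^ s j)
        = C Cconst * (X (Sum.inl (Sum.inl ())) ^ β * ∏ j, X (Sum.inl (Sum.inr j)) ^ s j))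
    ∧
    (∀ s : Fin k → ℕ, (∑ j, s j) = α →
      PhiZero ℓ k m β ((∏ i, X (Sum.inr (Sum.inl i)) ^ m i) * ∏ j, X (Sum.inr (Sum.inr j)) ^ s j)
        = C Cconst * (X (Sum.inr (Sum.inl ())) ^ β * ∏ j, X (Sum.inr (Sum.inr j)) ^ s j))
    ∧
    -- Φ maps invariants to invariants:
    (∀ f : PA ℓ k, f ∈ invPA ℓ k a n → PhiZero ℓ k m β f ∈ invPB k α β)
    ∧
    -- Φ descends to a degree-preserving isomorphism of graded ℂ-algebras:
    (∃ Φ : (invPA ℓ k a n ⧸ idealA ℓ k a n) ≃ₐ[ℂ] (invPB k α β ⧸ idealB k α β),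
      (∀ (f : invPA ℓ k a n) (g : invPB k α β),
          PhiZero ℓ k m β (f : PA ℓ k) = (g : PB k) →
          Φ (Ideal.Quotient.mk (idealA ℓ k a n) f) = Ideal.Quotient.mk (idealB k α β) g)
      ∧
      (∀ d : ℕ,
        Φ '' (Ideal.Quotient.mk (idealA ℓ k a n) ''
            {f : invPA ℓ k a n | ((f : PA ℓ k)).IsHomogeneous d})
          = Ideal.Quotient.mk (idealB k α β) ''
            {g : invPB k α β | ((g : PB k)).IsHomogeneous d})) := by
  intro α m β Cconst
  have i0 : Fin ℓ := ⟨0, hℓ⟩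
  have hdv : ∀ i, a i ∣ α := fun i => Finset.dvd_lcm (Finset.mem_univ i)
  have hr : ∀ i, a i * (α / a i) = α := fun i => Nat.mul_div_cancel' (hdv i)
  have hmr : ∀ i, n i * (α / a i) = m i := fun i => (Nat.mul_div_assoc _ (hdv i)).symm
  have hαp : α = ∏ i, a i := by
    apply Nat.dvd_antisymm
    · exact Finset.lcm_dvd fun i _ => Finset.dvd_prod_of_mem a (Finset.mem_univ i)
    · exact Finset.prod_dvd_of_isRelPrime
        (fun i _ j _ hij => Nat.coprime_iff_isRelPrime.1 (hF1 i j hij)) (fun i _ => hdv i)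
  have hα : 0 < α := by rw [hαp]; exact Finset.prod_pos fun i _ => ha i
  have ham : ∀ i, a i * m i = n i * α := fun i => by
    rw [← hmr, mul_left_comm, hr]
  have hm : ∀ i, 0 < m i := fun i => by
    apply Nat.pos_of_mul_pos_left (a := a i)
    rw [ham]; exact Nat.mul_pos (hn i) hα
  have hβ : β = ∑ i, m i := rfl
  have hβ0 : 0 < β := Finset.sum_pos (fun i _ => hm i) ⟨i0, Finset.mem_univ _⟩
  have hco : Nat.Coprime α β := by
    have := copr hr hαp ha hF1 hF2
    simp only [hmr] at this
    exact this
  have hC : Cconst = ∏ i, gam m β i ^ m i := cc_eq m β hβ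
  clear_value β m α Cconst
  have hinv : ∀ f : PA ℓ k, f ∈ invPA ℓ k a n → PhiZero ℓ k m β f ∈ invPB k α β :=
    fun f hf => Phi_inv _ hr hmr hβ f hf
  refine ⟨?_, ?_, ?_, ?_, hinv, ?_⟩
  · intro i
    rw [← gam_sq]
    simp only [PhiZero, map_mul, aeval_X, gam]
    ring
  · intro i j
    simp only [PhiZero, map_mul, aeval_X]
  · intro s _
    rw [hC]
    simp only [PhiZero, map_mul, map_prod, map_pow, aeval_X, mul_pow, Finset.prod_mul_distrib,
      Finset.prod_pow_eq_pow_sum, ← hβ, gam]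
    ring
  · intro s _
    rw [hC]
    simp only [PhiZero, map_mul, map_prod, map_pow, aeval_X, mul_pow, Finset.prod_mul_distrib,
      Finset.prod_pow_eq_pow_sum, ← hβ, gam]
    ring
  · let φ : invPA ℓ k a n →ₐ[ℂ] invPB k α β :=
      ((PhiZero ℓ k m β).comp (invPA ℓ k a n).val).codRestrict _ (fun f => hinv f f.2)
    have hφ : ∀ f, ((φ f : invPB k α β) : PB k) = PhiZero ℓ k m β (f : PA ℓ k) := fun f => rfl
    have hφs : ∀ g : invPB k α β, φ (secL a n m β (g : PB k)) = g := fun g =>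
      Subtype.ext (Phi_sec i0 ham hα hβ hβ0 hm hco g)
    have hsurj : Function.Surjective φ := fun g => ⟨_, hφs g⟩
    have hker0 : ∀ f, φ f = 0 → f ∈ idealA ℓ k a n := by
      intro f hf
      rw [← Ideal.Quotient.eq_zero_iff_mem, ← sec_Phi ha ham hα hβ0 hm f, ← hφ, hf]
      simp
    let ψ : invPA ℓ k a n →ₐ[ℂ] (invPB k α β ⧸ idealB k α β) :=
      (Ideal.Quotient.mkₐ ℂ (idealB k α β)).comp φ
    have hψ : ∀ f, ψ f = Ideal.Quotient.mk (idealB k α β) (φ f) := fun f => rfl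
    have hψs : Function.Surjective ψ :=
      (Ideal.Quotient.mkₐ_surjective ℂ _).comp hsurj
    have hJ : ∀ i, φ ⟨_, JA_mem ℓ k a n i⟩ ∈ idealB k α β ∧
        ∀ g : invPB k α β, (g : PB k) = JB k α β →
          φ (((β : ℂ) / n i) • ⟨_, JA_mem ℓ k a n i⟩) = g := by
      intro i
      have hβ' : (β : ℂ) ≠ 0 := by exact_mod_cast hβ0.ne'
      have hn' : (n i : ℂ) ≠ 0 := by exact_mod_cast (hn i).ne'
      have h2 : ∀ g : invPB k α β, (g : PB k) = JB k α β →
          φ (((β : ℂ) / n i) • ⟨_, JA_mem ℓ k a n i⟩) = g := by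
        intro g hg
        apply Subtype.ext
        rw [map_smul, Subalgebra.coe_smul, hφ, hg]
        change _ • PhiZero ℓ k m β (JA ℓ k a n i) = _
        rw [Phi_JA hβ0 ham, smul_smul, div_mul_div_cancel₀ hn', div_self hβ', one_smul]
      refine ⟨?_, h2⟩
      have h3 : φ ⟨_, JA_mem ℓ k a n i⟩ = algebraMap ℂ _ ((n i : ℂ) / β) *
          φ (((β : ℂ) / n i) • ⟨_, JA_mem ℓ k a n i⟩) := by
        rw [← Algebra.smul_def, map_smul, smul_smul, div_mul_div_cancel₀ hβ', div_self hn', one_smul]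
      rw [h3]
      refine Ideal.mul_mem_left _ _ (Ideal.subset_span ?_)
      change PhiZero ℓ k m β (((β : ℂ) / n i) • JA ℓ k a n i) = _
      rw [map_smul, Phi_JA hβ0 ham, smul_smul, div_mul_div_cancel₀ hn', div_self hβ', one_smul]
    have hker : idealA ℓ k a n = RingHom.ker ψ := by
      apply le_antisymm
      · refine Ideal.span_le.2 ?_
        rintro f ⟨i, hf⟩
        have : f = ⟨_, JA_mem ℓ k a n i⟩ := Subtype.ext hf
        subst this
        change ψ _ = 0
        rw [hψ, Ideal.Quotient.eq_zero_iff_mem]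
        exact (hJ i).1
      · intro f hf
        rw [RingHom.mem_ker, hψ, Ideal.Quotient.eq_zero_iff_mem] at hf
        have hle : idealB k α β ≤ Ideal.map φ (idealA ℓ k a n) := by
          refine Ideal.span_le.2 ?_
          intro g hg
          rw [← (hJ i0).2 g hg]
          refine Ideal.mem_map_of_mem φ ?_
          rw [Algebra.smul_def]
          exact Ideal.mul_mem_left _ _ (Ideal.subset_span ⟨i0, rfl⟩)
        obtain ⟨f', hf', he⟩ := (Ideal.mem_map_iff_of_surjective φ hsurj).1 (hle hf)
        have := hker0 (f - f') (by rw [map_sub, he, sub_self])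
        have := add_mem this hf'
        rwa [sub_add_cancel] at this
    let Φ := (Ideal.quotientEquivAlgOfEq ℂ hker).trans (Ideal.quotientKerAlgEquivOfSurjective hψs)
    have hΦ : ∀ f, Φ (Ideal.Quotient.mk (idealA ℓ k a n) f) =
        Ideal.Quotient.mk (idealB k α β) (φ f) := fun f => rfl
    clear_value Φ ψ φ
    refine ⟨Φ, ?_, ?_⟩
    · intro f g h
      rw [hΦ]
      congr 1
      exact Subtype.ext ((hφ f).trans h)
    · intro d
      ext y
      constructor
      · rintro ⟨_, ⟨f, hf, rfl⟩, rfl⟩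
        have hf' : (f : PA ℓ k).IsHomogeneous d := hf
        have h5 : (φ f : PB k).IsHomogeneous d := by
          rw [hφ]
          exact Phi_hom m β _ d hf'
        rw [hΦ]
        exact Set.mem_image_of_mem _ h5
      · rintro ⟨g, hg, rfl⟩
        have hg' : (g : PB k).IsHomogeneous d := hg
        have h6 := sec_hom i0 ham hα hβ hco g d hg'
        have h7 := hΦ (secL a n m β (g : PB k))
        rw [hφs] at h7
        rw [← h7]
        exact Set.mem_image_of_mem _ (Set.mem_image_of_mem _ h6)
end
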